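/- Let p be a prime, k ≥ 1, and let F be a finite field with p^k elements. Let α_1,…,α_n, β ∈ F satisfy Σ_{i=1}^n α_i a_i ≠ β for every a ∈ {0,1}^n. If f ∈ F[x_1,…,x_n] is a multilinear polynomial satisfying f(a)·(Σ_{i=1}^n α_i a_i − β) = 1 for every a ∈ {0,1}^n, then the total degree of f is at most k(p−1). -/

import Mathlib

/-!
Points of the Boolean cube have coordinates in the prime field, so Frobenius fixes them; hence
`P ^ p` agrees on the cube with the polynomial obtained from `P` by raising only its coefficients
to the `p`-th power. Writing `e` in base `p` therefore shows that `P ^ e` agrees on the cube with a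
polynomial of degree at most `deg P` times the sum of the digits of `e`. Inversion on `F` is the
power `p ^ k - 2`, whose lowest digit is `p - 2` and whose other `k - 1` digits are `p - 1`.
Finally, by the Combinatorial Nullstellensatz, a multilinear polynomial has the least degree among
all polynomials that agree with it on the cube.
-/

open MvPolynomial

theorem totalDegree_le_of_eval_eq {σ R : Type*} [Finite σ] [CommRing R] [IsDomain R]
    {f g : MvPolynomial σ R} (S : σ → Finset R) (hf : ∀ i, f.degreeOf i < (S i).card)
    (heval : ∀ a : σ → R, (∀ i, a i ∈ S i) → eval a f = eval a g) :
    f.totalDegree ≤ g.totalDegree := by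
  by_contra! hlt
  have hf_ne : f ≠ 0 := by
    rintro rfl
    simp at hlt
  obtain ⟨t, ht, ht_max⟩ := f.support.exists_mem_eq_sup (support_nonempty.mpr hf_ne) Finsupp.degree
  have ht_degree : f.totalDegree = t.degree := ht_max
  have hcoeff : (f - g).coeff t ≠ 0 := by
    rw [coeff_sub, coeff_eq_zero_of_totalDegree_lt (f := g) (hlt.trans_eq ht_degree), sub_zero]
    exact mem_support_iff.mp ht
  have hdegree : (f - g).totalDegree = t.degree := by
    rw [sub_eq_add_neg, totalDegree_add_eq_left_of_totalDegree_lt (by rwa [totalDegree_neg]),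
      ht_degree]
  obtain ⟨a, ha, hne⟩ := combinatorial_nullstellensatz_exists_eval_nonzero (f - g) t hcoeff
    hdegree S fun i ↦ (degreeOf_le_iff.mp le_rfl t ht).trans_lt (hf i)
  exact hne (by rw [map_sub, heval a ha, sub_self])

section TwistedPow

variable {σ R : Type*} [CommSemiring R]

theorem totalDegree_map_le {S : Type*} [CommSemiring S] (φ : R →+* S) (P : MvPolynomial σ R) :
    (map φ P).totalDegree ≤ P.totalDegree :=
  Finset.sup_mono (support_map_subset φ P)

variable (p : ℕ) [ExpChar R p]

/-- The product `∏ j, P_j ^ d_j` for a list `d_0, d_1, …` of base-`p` digits, lowest digit first,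
where `P_j` is `P` with its coefficients raised to the power `p ^ j`. It replaces the power of `P`
with exponent `∑ j, d_j p ^ j` at points fixed by Frobenius. The `d_j` may exceed `p - 1`. -/
noncomputable def twistedPow : List ℕ → MvPolynomial σ R → MvPolynomial σ R
  | [], _ => 1
  | d :: digits, P => P ^ d * twistedPow digits (map (frobenius R p) P)

theorem totalDegree_twistedPow_le (digits : List ℕ) (P : MvPolynomial σ R) :
    (twistedPow p digits P).totalDegree ≤ digits.sum * P.totalDegree := by
  induction digits generalizing P with
  | nil => simp [twistedPow]
  | cons d digits ih =>
    calc (P ^ d * twistedPow p digits (map (frobenius R p) P)).totalDegree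
        ≤ d * P.totalDegree + digits.sum * (map (frobenius R p) P).totalDegree :=
          (totalDegree_mul _ _).trans (add_le_add (totalDegree_pow P d) (ih _))
      _ ≤ d * P.totalDegree + digits.sum * P.totalDegree := by
          gcongr
          exact totalDegree_map_le _ P
      _ = (d :: digits).sum * P.totalDegree := by rw [List.sum_cons, add_mul]

variable {p}

theorem eval_map_frobenius {a : σ → R} (ha : ∀ i, a i ^ p = a i) (P : MvPolynomial σ R) :
    eval a (map (frobenius R p) P) = eval a P ^ p := by
  have ha_fixed : frobenius R p ∘ a = a := funext ha
  rw [← frobenius_def, map_eval, ha_fixed]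

theorem eval_twistedPow {a : σ → R} (ha : ∀ i, a i ^ p = a i) (digits : List ℕ)
    (P : MvPolynomial σ R) :
    eval a (twistedPow p digits P) = eval a P ^ Nat.ofDigits p digits := by
  induction digits generalizing P with
  | nil => simp [twistedPow]
  | cons d digits ih =>
    rw [twistedPow, map_mul, map_pow, ih, eval_map_frobenius ha, Nat.ofDigits_cons, pow_add,
      pow_mul]

end TwistedPow

theorem ofDigits_replicate_sub_one_add_one {b : ℕ} (hb : 0 < b) (m : ℕ) :
    Nat.ofDigits b (List.replicate m (b - 1)) + 1 = b ^ m := by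
  induction m with
  | zero => simp
  | succ m ih =>
    rw [List.replicate_succ, Nat.ofDigits_cons, pow_succ', ← ih, mul_add_one]
    lia

theorem ofDigits_sub_two_cons_add_two {b : ℕ} (hb : 2 ≤ b) (m : ℕ) :
    Nat.ofDigits b ((b - 2) :: List.replicate m (b - 1)) + 2 = b ^ (m + 1) := by
  rw [Nat.ofDigits_cons, pow_succ', ← ofDigits_replicate_sub_one_add_one (by lia) m, mul_add_one]
  lia

theorem degree_of_inverse_polynomial_general {p k : ℕ} (hp : p.Prime) {σ F : Type*} [Finite σ]
    [Field F] [Fintype F] (hcard : Fintype.card F = p ^ k) {S : σ → Finset F}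
    (hS : ∀ i, ∀ x ∈ S i, x ^ p = x) {f P : MvPolynomial σ F}
    (hf : ∀ i, f.degreeOf i < (S i).card)
    (hinv : ∀ a : σ → F, (∀ i, a i ∈ S i) → eval a f * eval a P = 1) :
    f.totalDegree ≤ (k * (p - 1) - 1) * P.totalDegree := by
  have : Fact p.Prime := ⟨hp⟩
  have : CharP F p := charP_of_card_eq_prime_pow hcard
  obtain ⟨m, rfl⟩ : ∃ m, k = m + 1 := Nat.exists_eq_succ_of_ne_zero fun hk ↦
    (Fintype.one_lt_card (α := F)).ne' (by rw [hcard, hk, pow_zero])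
  let digits := (p - 2) :: List.replicate m (p - 1)
  have hexp : Nat.ofDigits p digits + 2 = Fintype.card F :=
    (ofDigits_sub_two_cons_add_two hp.two_le m).trans hcard.symm
  have hsum : digits.sum = (m + 1) * (p - 1) - 1 := by
    have := hp.two_le
    simp only [digits, List.sum_cons, List.sum_replicate, smul_eq_mul, add_one_mul]
    lia
  have heval (a : σ → F) (ha : ∀ i, a i ∈ S i) : eval a f = eval a (twistedPow p digits P) := by
    have hP : eval a P ≠ 0 := right_ne_zero_of_mul_eq_one (hinv a ha)
    apply mul_right_cancel₀ hP
    rw [hinv a ha, eval_twistedPow fun i ↦ hS i (a i) (ha i), ← pow_succ,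
      ← FiniteField.pow_card_sub_one_eq_one _ hP, ← hexp, Nat.add_succ_sub_one]
  calc f.totalDegree ≤ (twistedPow p digits P).totalDegree := totalDegree_le_of_eval_eq S hf heval
    _ ≤ digits.sum * P.totalDegree := totalDegree_twistedPow_le p digits P
    _ = ((m + 1) * (p - 1) - 1) * P.totalDegree := by rw [hsum]

theorem totalDegree_sum_C_mul_X_sub_C_le {ι R : Type*} [Fintype ι] [CommRing R]
    (α : ι → R) (β : R) : (∑ i, C (α i) * X i - C β : MvPolynomial ι R).totalDegree ≤ 1 :=
  (totalDegree_sub_C_le _ _).trans <| totalDegree_finsetSum_le fun i _ ↦ by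
    rw [C_mul_X_eq_monomial]
    exact (totalDegree_monomial_le _ _).trans (by simp)

/-- Over `F = F_{p^k}`, if `∑ i, α i a i ≠ β` for all Boolean `a`,
then the multilinear polynomial agreeing with `1/(∑ i, α i x i - β)` on the Boolean
cube has total degree at most `k(p-1)`. -/
theorem degree_of_inverse_polynomial
    (p : ℕ) (hp : p.Prime) (k : ℕ) (hk : 1 ≤ k)
    (F : Type*) [Field F] [Fintype F] (hcard : Fintype.card F = p ^ k)
    (n : ℕ) (α : Fin n → F) (β : F)
    (hunsat : ∀ a : Fin n → F, (∀ i, a i = 0 ∨ a i = 1) → (∑ i, α i * a i) ≠ β)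
    (f : MvPolynomial (Fin n) F) (hml : ∀ i, f.degreeOf i ≤ 1)
    (hagree : ∀ a : Fin n → F, (∀ i, a i = 0 ∨ a i = 1) →
      MvPolynomial.eval a f * ((∑ i, α i * a i) - β) = 1) :
    f.totalDegree ≤ k * (p - 1) := by
  classical
  have hdegree : f.totalDegree ≤
      (k * (p - 1) - 1) * (∑ i, C (α i) * X i - C β : MvPolynomial (Fin n) F).totalDegree :=
    degree_of_inverse_polynomial_general hp hcard (S := fun _ ↦ {0, 1}) (by simp [hp.ne_zero])
      (by simpa [Nat.lt_succ_iff] using hml) (by simpa using hagree)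
  grw [hdegree, totalDegree_sum_C_mul_X_sub_C_le, mul_one, Nat.sub_le]
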